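/- Let N ∈ [1,∞), C > 0, and let V : [0,∞) → [0,∞) be nondecreasing and left-continuous with V(r) > 0 for r > 0 and V(r) ≤ C · max(1, r^N) for all r ≥ 0. Suppose that for every t > 0, (1/(2t)) ∫₀^∞ r V(r) exp(−r²/(4t)) dr = (1/(2Nt)) ∫₀^∞ V(r) ( r³/(2t) − 2r ) exp(−r²/(4t)) dr. Then there exists a constant c₁ > 0 such that V(r) = c₁ r^N for all r ≥ 0. -/

import Mathlib

open MeasureTheory Real ProbabilityTheory

lemma vr_integrable (N C : ℝ) (hN : 1 ≤ N) (V : ℝ → ℝ)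
    (hVmono : MonotoneOn V (Set.Ici 0))
    (hVnonneg : ∀ r : ℝ, 0 ≤ r → 0 ≤ V r)
    (hVgrowth : ∀ r : ℝ, 0 ≤ r → V r ≤ C * max 1 (r ^ N)) (hC : 0 < C) (k : ℕ) (s : ℝ) (hs : 0 < s) :
    IntegrableOn (fun r => r ^ k * V r * exp (-s * r ^ 2)) (Set.Ioi 0) := by
  have h1 := (integrableOn_rpow_mul_exp_neg_mul_sq hs (s := (k:ℝ)) (by linarith [k.cast_nonneg (α := ℝ)])).const_mul C
  have h2 := (integrableOn_rpow_mul_exp_neg_mul_sq hs (s := (k:ℝ) + N) (by linarith [k.cast_nonneg (α := ℝ)])).const_mul C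
  have hm : AEMeasurable V (volume.restrict (Set.Ioi 0)) :=
    aemeasurable_restrict_of_monotoneOn measurableSet_Ioi (hVmono.mono Set.Ioi_subset_Ici_self)
  refine Integrable.mono' (h1.add h2) (AEMeasurable.aestronglyMeasurable (by fun_prop)) ?_
  filter_upwards [ae_restrict_mem measurableSet_Ioi] with r hr
  have hr : 0 < r := hr
  have hv := hVnonneg r hr.le
  rw [Real.norm_of_nonneg (by positivity)]
  have hb : V r ≤ C * (1 + r ^ N) := (hVgrowth r hr.le).trans (by
    gcongr
    have : 0 ≤ r ^ N := by positivity
    apply max_le <;> linarith)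
  simp only [Pi.add_apply]
  rw [rpow_add hr, rpow_natCast]
  calc r ^ k * V r * exp (-s * r ^ 2) ≤ r ^ k * (C * (1 + r ^ N)) * exp (-s * r ^ 2) := by gcongr
    _ = _ := by ring

/-- the weighted measure -/
noncomputable def vrM (V : ℝ → ℝ) : Measure ℝ :=
  (volume.restrict (Set.Ioi (0:ℝ))).withDensity (fun r => ENNReal.ofReal (r * V r * exp (-r ^ 2)))

lemma vr_dens_meas (V : ℝ → ℝ) (hVmono : MonotoneOn V (Set.Ici 0)) :
    AEMeasurable (fun r => ENNReal.ofReal (r * V r * exp (-r ^ 2))) (volume.restrict (Set.Ioi (0:ℝ))) := by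
  have hm : AEMeasurable V (volume.restrict (Set.Ioi 0)) :=
    aemeasurable_restrict_of_monotoneOn measurableSet_Ioi (hVmono.mono Set.Ioi_subset_Ici_self)
  fun_prop

lemma vr_integral (V : ℝ → ℝ) (hVmono : MonotoneOn V (Set.Ici 0))
    (hVnonneg : ∀ r : ℝ, 0 ≤ r → 0 ≤ V r) (g : ℝ → ℝ) :
    ∫ r, g r ∂(vrM V) = ∫ r in Set.Ioi 0, r * V r * exp (-r ^ 2) * g r := by
  rw [vrM, integral_withDensity_eq_integral_toReal_smul₀ (vr_dens_meas V hVmono) (by simp)]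
  refine setIntegral_congr_fun measurableSet_Ioi fun r hr => ?_
  have hr : 0 < r := hr
  have hv := hVnonneg r hr.le
  simp only [smul_eq_mul]
  rw [ENNReal.toReal_ofReal (by positivity)]

lemma vr_integrable_iff (V : ℝ → ℝ) (hVmono : MonotoneOn V (Set.Ici 0))
    (hVnonneg : ∀ r : ℝ, 0 ≤ r → 0 ≤ V r) (g : ℝ → ℝ) :
    Integrable g (vrM V) ↔ IntegrableOn (fun r => r * V r * exp (-r ^ 2) * g r) (Set.Ioi 0) := by
  rw [vrM, integrable_withDensity_iff_integrable_smul₀' (vr_dens_meas V hVmono) (by simp)]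
  refine integrableOn_congr_fun (fun r hr => ?_) measurableSet_Ioi
  have hr : 0 < r := hr
  have hv := hVnonneg r hr.le
  simp only [smul_eq_mul]
  rw [ENNReal.toReal_ofReal (by positivity)]

lemma vr_expset (N C : ℝ) (hN : 1 ≤ N) (V : ℝ → ℝ)
    (hVmono : MonotoneOn V (Set.Ici 0))
    (hVnonneg : ∀ r : ℝ, 0 ≤ r → 0 ≤ V r)
    (hVpos : ∀ r : ℝ, 0 < r → 0 < V r)
    (hVgrowth : ∀ r : ℝ, 0 ≤ r → V r ≤ C * max 1 (r ^ N)) (hC : 0 < C) :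
    integrableExpSet (fun r : ℝ => r ^ 2) (vrM V) = Set.Iio 1 := by
  ext t
  rw [integrableExpSet, Set.mem_ofPred_eq, vr_integrable_iff V hVmono hVnonneg, Set.mem_Iio]
  have he : (fun r => r * V r * exp (-r ^ 2) * exp (t * r ^ 2))
      = fun r => r ^ 1 * V r * exp (-(1 - t) * r ^ 2) := by
    ext r
    rw [mul_assoc, ← exp_add, pow_one]
    congr 2
    ring
  rw [he]
  constructor
  · intro h
    by_contra! ht
    have h1 := h.mono_set (Set.Ioi_subset_Ioi (zero_le_one (α := ℝ)))
    have h2 : IntegrableOn (fun _ : ℝ => V 1) (Set.Ioi 1) := by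
      refine Integrable.mono' h1 aestronglyMeasurable_const ?_
      filter_upwards [ae_restrict_mem measurableSet_Ioi] with r hr
      have hr : 1 < r := hr
      have h0 := hVpos 1 one_pos
      rw [Real.norm_of_nonneg h0.le]
      have hv : V 1 ≤ V r := hVmono (by simp) (by simp; linarith) hr.le
      have h4 : 1 ≤ exp (-(1 - t) * r ^ 2) := by
        apply one_le_exp
        have := sq_nonneg r
        nlinarith
      have h5 : V 1 ≤ r * V r := by nlinarith
      rw [pow_one]
      nlinarith
    rw [integrableOn_const_iff] at h2
    simp [(hVpos 1 one_pos).ne'] at h2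
  · intro ht
    exact vr_integrable N C hN V hVmono hVnonneg hVgrowth hC 1 (1 - t) (by linarith)

lemma vr_finite (N C : ℝ) (hN : 1 ≤ N) (V : ℝ → ℝ)
    (hVmono : MonotoneOn V (Set.Ici 0))
    (hVnonneg : ∀ r : ℝ, 0 ≤ r → 0 ≤ V r)
    (hVpos : ∀ r : ℝ, 0 < r → 0 < V r)
    (hVgrowth : ∀ r : ℝ, 0 ≤ r → V r ≤ C * max 1 (r ^ N)) (hC : 0 < C) :
    IsFiniteMeasure (vrM V) := by
  have h : (0:ℝ) ∈ integrableExpSet (fun r : ℝ => r ^ 2) (vrM V) := by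
    rw [vr_expset N C hN V hVmono hVnonneg hVpos hVgrowth hC]; simp
  have h' := integrable_of_mem_integrableExpSet h
  simp only [zero_mul, exp_zero] at h'
  exact (integrable_const_iff_isFiniteMeasure one_ne_zero).1 h'

lemma vr_mgf (V : ℝ → ℝ) (hVmono : MonotoneOn V (Set.Ici 0))
    (hVnonneg : ∀ r : ℝ, 0 ≤ r → 0 ≤ V r) (t : ℝ) :
    mgf (fun r : ℝ => r ^ 2) (vrM V) t = ∫ r in Set.Ioi (0:ℝ), r * V r * exp (-(1 - t) * r ^ 2) := by
  rw [mgf, vr_integral V hVmono hVnonneg]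
  congr 1
  ext r
  rw [mul_assoc, ← exp_add]
  congr 2
  ring

lemma vr_map_inj (V W : ℝ → ℝ) (h : (vrM V).map (fun r : ℝ => r ^ 2) = (vrM W).map (fun r : ℝ => r ^ 2)) :
    vrM V = vrM W := by
  have key : ∀ U : ℝ → ℝ, ((vrM U).map (fun r : ℝ => r ^ 2)).map Real.sqrt = vrM U := by
    intro U
    rw [Measure.map_map (by fun_prop) (by fun_prop)]
    conv_rhs => rw [← Measure.map_id (μ := vrM U)]
    apply Measure.map_congr
    have : ∀ᵐ r ∂(vrM U), r ∈ Set.Ioi (0:ℝ) :=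
      (withDensity_absolutelyContinuous _ _) (ae_restrict_mem measurableSet_Ioi)
    filter_upwards [this] with r hr
    have hr : 0 < r := hr
    simp [Real.sqrt_sq hr.le]
  rw [← key V, ← key W, h]

lemma vr_hasDeriv (N C : ℝ) (hN : 1 ≤ N) (V : ℝ → ℝ)
    (hVmono : MonotoneOn V (Set.Ici 0))
    (hVnonneg : ∀ r : ℝ, 0 ≤ r → 0 ≤ V r)
    (hVpos : ∀ r : ℝ, 0 < r → 0 < V r)
    (hVgrowth : ∀ r : ℝ, 0 ≤ r → V r ≤ C * max 1 (r ^ N)) (hC : 0 < C) (t : ℝ) (ht : t < 1) :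
    HasDerivAt (mgf (fun r : ℝ => r ^ 2) (vrM V))
      (∫ r in Set.Ioi (0:ℝ), r ^ 3 * V r * exp (-(1 - t) * r ^ 2)) t := by
  have h := hasDerivAt_mgf (X := fun r : ℝ => r ^ 2) (μ := vrM V) (t := t) (by
    rw [vr_expset N C hN V hVmono hVnonneg hVpos hVgrowth hC, interior_Iio]; exact ht)
  rw [vr_integral V hVmono hVnonneg] at h
  convert h using 2
  ext r
  have : exp (-(1 - t) * r ^ 2) = exp (-r ^ 2) * exp (t * r ^ 2) := by
    rw [← exp_add]; congr 1; ring
  rw [this]; ring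

lemma vr_mgf_form (N C : ℝ) (hN : 1 ≤ N) (V : ℝ → ℝ)
    (hVmono : MonotoneOn V (Set.Ici 0))
    (hVnonneg : ∀ r : ℝ, 0 ≤ r → 0 ≤ V r)
    (hVpos : ∀ r : ℝ, 0 < r → 0 < V r)
    (hVgrowth : ∀ r : ℝ, 0 ≤ r → V r ≤ C * max 1 (r ^ N)) (hC : 0 < C)
    (hid : ∀ t : ℝ, 0 < t →
      (1 / (2 * t)) * ∫ r in Set.Ioi (0:ℝ), r * V r * Real.exp (-(r ^ 2) / (4 * t))
        = (1 / (2 * N * t)) *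
            ∫ r in Set.Ioi (0:ℝ),
              V r * (r ^ 3 / (2 * t) - 2 * r) * Real.exp (-(r ^ 2) / (4 * t))) :
    ∀ t : ℝ, t < 1 → mgf (fun r : ℝ => r ^ 2) (vrM V) t
      = mgf (fun r : ℝ => r ^ 2) (vrM V) 0 * (1 - t) ^ (-((N + 2) / 2)) := by
  set M := mgf (fun r : ℝ => r ^ 2) (vrM V) with hM
  have hode : ∀ t : ℝ, t < 1 → HasDerivAt M ((N + 2) / 2 * M t / (1 - t)) t := by
    intro t ht
    have h := vr_hasDeriv N C hN V hVmono hVnonneg hVpos hVgrowth hC t ht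
    have hs : 0 < 1 - t := by linarith
    convert h using 1
    have h2 := hid (1 / (4 * (1 - t))) (by positivity)
    have i1 := vr_integrable N C hN V hVmono hVnonneg hVgrowth hC 1 (1 - t) hs
    have i3 := vr_integrable N C hN V hVmono hVnonneg hVgrowth hC 3 (1 - t) hs
    have e : ∀ r : ℝ, -(r ^ 2) / (4 * (1 / (4 * (1 - t)))) = -(1 - t) * r ^ 2 := by
      intro r; field_simp
    simp only [e] at h2
    have e3 : ∫ r in Set.Ioi (0:ℝ), V r * (r ^ 3 / (2 * (1 / (4 * (1 - t)))) - 2 * r) * exp (-(1 - t) * r ^ 2)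
        = 2 * (1 - t) * (∫ r in Set.Ioi (0:ℝ), r ^ 3 * V r * exp (-(1 - t) * r ^ 2))
          - 2 * ∫ r in Set.Ioi (0:ℝ), r ^ 1 * V r * exp (-(1 - t) * r ^ 2) := by
      rw [← integral_const_mul, ← integral_const_mul, ← integral_sub (i3.const_mul _) (i1.const_mul _)]
      congr 1
      ext r
      field_simp
      ring
    rw [e3, ← vr_mgf V hVmono hVnonneg] at h2
    simp only [pow_one] at h2
    rw [← vr_mgf V hVmono hVnonneg, ← hM] at h2
    field_simp at h2
    field_simp
    linarith
  intro t ht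
  have hconst : M t * (1 - t) ^ ((N + 2) / 2) = M 0 * (1 - 0) ^ ((N + 2) / 2) := by
    have hd : ∀ x ∈ Set.Iio (1:ℝ), HasDerivAt (fun t => M t * (1 - t) ^ ((N + 2) / 2)) 0 x := by
      intro x hx
      have hs : 0 < 1 - x := by have : x < 1 := hx; linarith
      have h1 := (((hasDerivAt_id x).const_sub 1).rpow_const (p := (N + 2) / 2) (Or.inl hs.ne'))
      have h2 := (hode x hx).mul h1
      have hz : (N + 2) / 2 * M x / (1 - x) * (1 - id x) ^ ((N + 2) / 2)
          + M x * (-1 * ((N + 2) / 2) * (1 - id x) ^ ((N + 2) / 2 - 1)) = 0 := by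
        rw [id, rpow_sub_one hs.ne']
        field_simp
        ring
      rw [hz] at h2
      exact h2
    refine IsOpen.is_const_of_deriv_eq_zero isOpen_Iio isPreconnected_Iio
      (fun x hx => (hd x hx).differentiableAt.differentiableWithinAt)
      (fun x hx => (hd x hx).deriv) ht (by simp)
  have hs : 0 < 1 - t := by linarith
  rw [sub_zero, one_rpow, mul_one] at hconst
  rw [← hconst, rpow_neg hs.le, mul_assoc, mul_inv_cancel₀ (by positivity), mul_one]

lemma vr_eq_measure (N C D : ℝ) (hN : 1 ≤ N) (V W : ℝ → ℝ)
    (hVmono : MonotoneOn V (Set.Ici 0))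
    (hVnonneg : ∀ r : ℝ, 0 ≤ r → 0 ≤ V r)
    (hVpos : ∀ r : ℝ, 0 < r → 0 < V r)
    (hVgrowth : ∀ r : ℝ, 0 ≤ r → V r ≤ C * max 1 (r ^ N)) (hC : 0 < C)
    (hWmono : MonotoneOn W (Set.Ici 0))
    (hWnonneg : ∀ r : ℝ, 0 ≤ r → 0 ≤ W r)
    (hWpos : ∀ r : ℝ, 0 < r → 0 < W r)
    (hWgrowth : ∀ r : ℝ, 0 ≤ r → W r ≤ D * max 1 (r ^ N)) (hD : 0 < D)
    (h0 : mgf (fun r : ℝ => r ^ 2) (vrM V) 0 ≠ 0)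
    (h : ∀ t < 1, mgf (fun r : ℝ => r ^ 2) (vrM V) t = mgf (fun r : ℝ => r ^ 2) (vrM W) t) :
    V =ᵐ[volume.restrict (Set.Ioi 0)] W := by
  have eV := vr_expset N C hN V hVmono hVnonneg hVpos hVgrowth hC
  have eW := vr_expset N D hN W hWmono hWnonneg hWpos hWgrowth hD
  have := vr_finite N C hN V hVmono hVnonneg hVpos hVgrowth hC
  have := vr_finite N D hN W hWmono hWnonneg hWpos hWgrowth hD
  have hm : mgf (fun r : ℝ => r ^ 2) (vrM V) = mgf (fun r : ℝ => r ^ 2) (vrM W) := by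
    ext t
    by_cases ht : t < 1
    · exact h t ht
    · have a1 : t ∉ integrableExpSet (fun r : ℝ => r ^ 2) (vrM V) := by rw [eV]; exact ht
      have a2 : t ∉ integrableExpSet (fun r : ℝ => r ^ 2) (vrM W) := by rw [eW]; exact ht
      rw [mgf_undef a1, mgf_undef a2]
  have hz : vrM V = 0 ↔ vrM W = 0 := by
    constructor
    · intro hz; rw [hz] at h0; simp at h0
    · intro hz; rw [hm, hz] at h0; simp at h0
  have hc := eqOn_complexMGF_of_mgf' hm hz
  have hmap : (vrM V).map (fun r : ℝ => r ^ 2) = (vrM W).map (fun r : ℝ => r ^ 2) := by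
    apply Measure.ext_of_charFun
    ext t
    rw [← complexMGF_mul_I (by fun_prop), ← complexMGF_mul_I (by fun_prop)]
    apply hc
    simp [eV]
  have hM := vr_map_inj V W hmap
  have hfin : ∫⁻ x, ENNReal.ofReal (x * V x * exp (-x ^ 2)) ∂(volume.restrict (Set.Ioi (0:ℝ))) ≠ ⊤ := by
    have := measure_ne_top (vrM V) Set.univ
    rwa [vrM, withDensity_apply _ MeasurableSet.univ, Measure.restrict_univ] at this
  have hae := (withDensity_eq_iff (vr_dens_meas V hVmono) (vr_dens_meas W hWmono) hfin).1 hM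
  filter_upwards [hae, ae_restrict_mem measurableSet_Ioi] with r hr hr0
  have hr0 : 0 < r := hr0
  have hv := hVnonneg r hr0.le
  have hw := hWnonneg r hr0.le
  rw [ENNReal.ofReal_eq_ofReal_iff (by positivity) (by positivity)] at hr
  have he := exp_pos (-r ^ 2)
  exact mul_left_cancel₀ hr0.ne' (mul_right_cancel₀ he.ne' hr)

theorem volume_rigidity
    (N C : ℝ) (hN : 1 ≤ N) (hC : 0 < C)
    (V : ℝ → ℝ)
    (hVmono : MonotoneOn V (Set.Ici 0))
    (hVlc : ∀ r : ℝ, 0 < r → ContinuousWithinAt V (Set.Iio r) r)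
    (hVpos : ∀ r : ℝ, 0 < r → 0 < V r)
    (hVnonneg : ∀ r : ℝ, 0 ≤ r → 0 ≤ V r)
    (hVgrowth : ∀ r : ℝ, 0 ≤ r → V r ≤ C * max 1 (r ^ N))
    (hid : ∀ t : ℝ, 0 < t →
      (1 / (2 * t)) * ∫ r in Set.Ioi (0:ℝ), r * V r * Real.exp (-(r ^ 2) / (4 * t))
        = (1 / (2 * N * t)) *
            ∫ r in Set.Ioi (0:ℝ),
              V r * (r ^ 3 / (2 * t) - 2 * r) * Real.exp (-(r ^ 2) / (4 * t))) :
    ∃ c₁ : ℝ, 0 < c₁ ∧ ∀ r : ℝ, 0 ≤ r → V r = c₁ * r ^ N := by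
  have hform := vr_mgf_form N C hN V hVmono hVnonneg hVpos hVgrowth hC hid
  set K := mgf (fun r : ℝ => r ^ 2) (vrM V) 0 with hK
  have hKpos : 0 < K := by
    rw [hK, vr_mgf V hVmono hVnonneg]
    have i1 := vr_integrable N C hN V hVmono hVnonneg hVgrowth hC 1 (1 - 0) (by norm_num)
    simp only [pow_one] at i1
    rw [setIntegral_pos_iff_support_of_nonneg_ae _ i1]
    · have : Set.Ioi (0:ℝ) ⊆ (Function.support fun r => r * V r * exp (-(1 - 0) * r ^ 2)) ∩ Set.Ioi 0 := by
        intro r hr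
        have hr0 : 0 < r := hr
        have := hVpos r hr0
        refine ⟨?_, hr⟩
        rw [Function.mem_support]
        positivity
      refine lt_of_lt_of_le ?_ (measure_mono this)
      simp
    · filter_upwards [ae_restrict_mem measurableSet_Ioi] with r hr
      have hr0 : 0 < r := hr
      have := hVpos r hr0
      simp only [Pi.zero_apply]
      positivity
  have hG : 0 < Gamma ((N + 2) / 2) := Gamma_pos_of_pos (by linarith)
  set c : ℝ := 2 * K / Gamma ((N + 2) / 2) with hc
  have hcpos : 0 < c := by positivity
  have hWmono : MonotoneOn (fun r : ℝ => c * r ^ N) (Set.Ici 0) := by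
    intro a ha b hb hab
    have ha : 0 ≤ a := ha
    simp only
    gcongr
  have hWnonneg : ∀ r : ℝ, 0 ≤ r → 0 ≤ c * r ^ N := fun r hr => by positivity
  have hWpos : ∀ r : ℝ, 0 < r → 0 < c * r ^ N := fun r hr => by positivity
  have hWm : ∀ t < 1, mgf (fun r : ℝ => r ^ 2) (vrM (fun r => c * r ^ N)) t = K * (1 - t) ^ (-((N + 2) / 2)) := by
    intro t ht
    have hs : 0 < 1 - t := by linarith
    rw [vr_mgf _ hWmono hWnonneg]
    have h1 := integral_rpow_mul_exp_neg_mul_rpow (p := 2) (q := N + 1) two_pos (by linarith) hs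
    have : ∫ r in Set.Ioi (0:ℝ), r * (c * r ^ N) * exp (-(1 - t) * r ^ 2)
        = c * ∫ r in Set.Ioi (0:ℝ), r ^ (N + 1) * exp (-(1 - t) * r ^ (2:ℝ)) := by
      rw [← integral_const_mul]
      refine setIntegral_congr_fun measurableSet_Ioi fun r hr => ?_
      have hr0 : 0 < r := hr
      rw [rpow_add_one hr0.ne', rpow_two]
      ring
    rw [this, h1, show (N + 1 + 1) / 2 = (N + 2) / 2 by ring,
      show -(N + 1 + 1) / 2 = -((N + 2) / 2) by ring, hc]
    field_simp
  have hae := vr_eq_measure N C c hN V (fun r => c * r ^ N) hVmono hVnonneg hVpos hVgrowth hC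
    hWmono hWnonneg hWpos (fun r hr => by gcongr; exact le_max_right _ _) hcpos hKpos.ne'
    (fun t ht => by rw [hform t ht, hWm t ht])
  have hcont : Continuous (fun r : ℝ => c * r ^ N) :=
    continuous_const.mul (continuous_id.rpow_const (fun _ => Or.inr (by linarith)))
  have hposeq : ∀ r : ℝ, 0 < r → V r = c * r ^ N := by
    intro r hr
    have hfr : ∃ᶠ x in nhdsWithin r (Set.Iio r), V x = c * x ^ N := by
      rw [Filter.frequently_iff]
      intro U hU
      rw [mem_nhdsLT_iff_exists_Ioo_subset' hr] at hU
      obtain ⟨l, hl, hlU⟩ := hU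
      rw [Filter.EventuallyEq, ae_restrict_iff' measurableSet_Ioi] at hae
      have hd := Measure.dense_of_ae hae
      obtain ⟨x, hx, hx2⟩ := hd.exists_between (show max l 0 < r from max_lt hl hr)
      exact ⟨x, hlU ⟨(le_max_left _ _).trans_lt hx2.1, hx2.2⟩, hx ((le_max_right _ _).trans_lt hx2.1)⟩
    by_contra hne
    have hsub := ((hVlc r hr).sub hcont.continuousAt.continuousWithinAt).eventually_ne
      (sub_ne_zero.2 hne)
    obtain ⟨x, hx1, hx2⟩ := (hfr.and_eventually hsub).exists
    exact hx2 (sub_eq_zero.2 hx1)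
  refine ⟨c, hcpos, fun r hr => ?_⟩
  rcases hr.eq_or_lt with rfl | hr
  · have hz : (0:ℝ) ^ N = 0 := zero_rpow (by linarith)
    rw [hz, mul_zero]
    refine le_antisymm ?_ (hVnonneg 0 le_rfl)
    have ht : Filter.Tendsto (fun r : ℝ => c * r ^ N) (nhdsWithin 0 (Set.Ioi 0)) (nhds 0) := by
      have := hcont.tendsto 0
      simp only [hz, mul_zero] at this
      exact this.mono_left nhdsWithin_le_nhds
    refine ge_of_tendsto ht ?_
    filter_upwards [self_mem_nhdsWithin] with x hx
    have hx : 0 < x := hx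
    rw [← hposeq x hx]
    exact hVmono (by simp) hx.le hx.le
  · exact hposeq r hr
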